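/- arXiv:1203.2208 — 2 statements merged into one kernel-verified Lean document; each statement's English description precedes it below -/
import Mathlib

section
/- For every real number 0 < q < ∞ there exists a constant C = C(q) > 0 with the following property: for every real number c > 0, every positive integer n, every interval [a, b] ⊆ [−1, 1] with 0 < b − a ≤ (c n²)^{−max(q, 1)}, and every real polynomial P of degree at most n, one has ‖P‖_{L_q[a,b]} ≤ (C/c) · ‖P‖_{L_q[−1,1]}. -/
open Polynomial MeasureTheory

/-- The `L_q` quasinorm of `f` on `[a,b]` for `0 < q < ∞`. -/
noncomputable def LqNorm (f : ℝ → ℝ) (q a b : ℝ) : ℝ :=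
  (∫ x in a..b, |f x| ^ q) ^ (1 / q)

/-- Markov's inequality for the derivative at the endpoint `1` of `[-1, 1]`. -/
theorem abs_eval_one_derivative_le {n : ℕ} {P : ℝ[X]} (hP : P.natDegree ≤ n) {M : ℝ} (hM : 0 < M)
    (hb : ∀ x ∈ Set.Icc (-1 : ℝ) 1, |P.eval x| ≤ M) :
    |P.derivative.eval 1| ≤ n ^ 2 * M := by
  have key : ∀ s : ℝ, |s| = 1 → s * P.derivative.eval 1 ≤ n ^ 2 * M := by
    intro s hs
    have h := Chebyshev.eval_iterate_derivative_le_of_forall_abs_le_one (n := n) (k := 1)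
      (P := C (s * M⁻¹) * P) le_rfl
      (degree_le_of_natDegree_le ((natDegree_C_mul_le _ _).trans hP)) (fun x hx => by
        rw [eval_mul, eval_C, abs_mul, abs_mul, hs, abs_of_pos (inv_pos.2 hM), one_mul,
          inv_mul_le_one₀ hM]
        exact hb x hx)
    simp only [Function.iterate_one, derivative_C_mul, eval_mul, eval_C,
      Chebyshev.derivative_T_eval_one] at h
    push_cast at h
    rw [mul_right_comm, ← div_eq_mul_inv, div_le_iff₀ hM] at h
    exact h
  rw [abs_le']
  constructor
  · simpa using key 1 (by simp)
  · simpa using key (-1) (by simp)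

/-- Markov's inequality on `[-1, 1]`, up to a factor `2`. -/
theorem abs_eval_derivative_le {n : ℕ} {P : ℝ[X]} (hP : P.natDegree ≤ n) {M : ℝ} (hM : 0 < M)
    (hb : ∀ x ∈ Set.Icc (-1 : ℝ) 1, |P.eval x| ≤ M) {x : ℝ} (hx : x ∈ Set.Icc (-1 : ℝ) 1) :
    |P.derivative.eval x| ≤ 2 * n ^ 2 * M := by
  obtain ⟨hx₁, hx₂⟩ := hx
  obtain ⟨s, t, hst, hs, hmap⟩ : ∃ s t : ℝ, s + t = x ∧ 1 / 2 ≤ |s| ∧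
      ∀ u ∈ Set.Icc (-1 : ℝ) 1, s * u + t ∈ Set.Icc (-1 : ℝ) 1 := by
    rcases le_total 0 x with h | h
    · refine ⟨(x + 1) / 2, (x - 1) / 2, by ring, ?_, fun u hu => ⟨?_, ?_⟩⟩
      · rw [abs_of_nonneg (by linarith)]; linarith
      · nlinarith [hu.1, hu.2]
      · nlinarith [hu.1, hu.2]
    · refine ⟨(x - 1) / 2, (x + 1) / 2, by ring, ?_, fun u hu => ⟨?_, ?_⟩⟩
      · rw [abs_of_nonpos (by linarith)]; linarith
      · nlinarith [hu.1, hu.2]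
      · nlinarith [hu.1, hu.2]
  have hdeg : (P.comp (C s * X + C t)).natDegree ≤ n := by
    refine natDegree_comp_le.trans ?_
    calc P.natDegree * (C s * X + C t).natDegree ≤ n * 1 :=
          Nat.mul_le_mul hP natDegree_linear_le
      _ = n := mul_one n
  have h := abs_eval_one_derivative_le hdeg hM (fun u hu => by
    simpa using hb _ (hmap u hu))
  have heq : (P.comp (C s * X + C t)).derivative.eval 1 = s * P.derivative.eval x := by
    simp [derivative_comp, hst]
  rw [heq, abs_mul] at h
  nlinarith [abs_nonneg (P.derivative.eval x)]

theorem intervalIntegrable_abs_eval_rpow (P : ℝ[X]) {q : ℝ} (hq : 0 ≤ q) (a b : ℝ) :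
    IntervalIntegrable (fun x => |P.eval x| ^ q) volume a b :=
  (P.continuous.abs.rpow_const fun _ => Or.inr hq).intervalIntegrable a b

theorem integral_abs_eval_rpow_mono (P : ℝ[X]) {q : ℝ} (hq : 0 ≤ q) {a b : ℝ} (ha : -1 ≤ a)
    (hab : a ≤ b) (hb : b ≤ 1) :
    ∫ x in a..b, |P.eval x| ^ q ≤ ∫ x in (-1 : ℝ)..1, |P.eval x| ^ q :=
  intervalIntegral.integral_mono_interval ha hab hb
    (Filter.Eventually.of_forall fun _ => Real.rpow_nonneg (abs_nonneg _) q)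
    (intervalIntegrable_abs_eval_rpow P hq _ _)

/-- Nikolskii's inequality between the `L_∞` and `L_q` norms on `[-1, 1]`, for all `q > 0`. -/
theorem abs_eval_rpow_le_integral {q : ℝ} (hq : 0 < q) {n : ℕ} (hn : 0 < n) {P : ℝ[X]}
    (hP : P.natDegree ≤ n) {y : ℝ} (hy : y ∈ Set.Icc (-1 : ℝ) 1) :
    |P.eval y| ^ q ≤ 4 * 2 ^ q * n ^ 2 * ∫ x in (-1 : ℝ)..1, |P.eval x| ^ q := by
  obtain ⟨z, hz, hmax⟩ := isCompact_Icc.exists_isMaxOn ⟨y, hy⟩ P.continuous.abs.continuousOn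
  have hb : ∀ x ∈ Set.Icc (-1 : ℝ) 1, |P.eval x| ≤ |P.eval z| := fun x hx => hmax hx
  refine (Real.rpow_le_rpow (abs_nonneg _) (hb y hy) hq.le).trans ?_
  set M := |P.eval z| with hMdef
  have hn1 : (1 : ℝ) ≤ (n : ℝ) ^ 2 := one_le_pow₀ (by exact_mod_cast hn)
  rcases (abs_nonneg (P.eval z)).eq_or_lt with h0 | hM
  · rw [hMdef, ← h0, Real.zero_rpow hq.ne']
    have := intervalIntegral.integral_nonneg (μ := volume) (f := fun x => |P.eval x| ^ q)
      (by norm_num : (-1 : ℝ) ≤ 1) (fun x _ => Real.rpow_nonneg (abs_nonneg _) q)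
    positivity
  set h : ℝ := 1 / (4 * n ^ 2) with hh
  have hnh : (n : ℝ) ^ 2 * h = 1 / 4 := by rw [hh]; field_simp
  have hpos : 0 < h := by positivity
  have hle : h ≤ 1 / 4 := by nlinarith
  have hlow : ∀ x ∈ Set.Icc (-1 : ℝ) 1, |x - z| ≤ h → M / 2 ≤ |P.eval x| := by
    intro x hx hxz
    have hmv := (convex_Icc (-1 : ℝ) 1).norm_image_sub_le_of_norm_hasDerivWithin_le
      (fun u _ => (P.hasDerivAt u).hasDerivWithinAt)
      (fun u hu => abs_eval_derivative_le hP hM hb hu) hz hx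
    rw [Real.norm_eq_abs, Real.norm_eq_abs] at hmv
    have h1 : 2 * n ^ 2 * M * |x - z| ≤ M / 2 := by
      calc 2 * n ^ 2 * M * |x - z| ≤ 2 * n ^ 2 * M * h := by gcongr
        _ = 2 * M * (n ^ 2 * h) := by ring
        _ = M / 2 := by rw [hnh]; ring
    have h2 := abs_sub_abs_le_abs_sub (P.eval z) (P.eval x)
    rw [abs_sub_comm] at h2
    linarith
  obtain ⟨a, ha, hb', hz'⟩ : ∃ a : ℝ, -1 ≤ a ∧ a + h ≤ 1 ∧
      ∀ x ∈ Set.Icc a (a + h), |x - z| ≤ h := by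
    rcases le_total 0 z with h0 | h0
    · exact ⟨z - h, by linarith, by linarith [hz.2], fun x hx => by
        rw [abs_le]; constructor <;> linarith [hx.1, hx.2]⟩
    · exact ⟨z, hz.1, by linarith, fun x hx => by
        rw [abs_le]; constructor <;> linarith [hx.1, hx.2]⟩
  have hint : h * (M / 2) ^ q ≤ ∫ x in a..(a + h), |P.eval x| ^ q := by
    have := intervalIntegral.integral_mono_on (by linarith : a ≤ a + h)
      (intervalIntegrable_const (μ := volume) (c := (M / 2) ^ q))
      (intervalIntegrable_abs_eval_rpow P hq.le a (a + h)) (fun x hx =>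
        Real.rpow_le_rpow (by positivity)
          (hlow x ⟨ha.trans hx.1, hx.2.trans hb'⟩ (hz' x hx)) hq.le)
    simpa using this
  have hmono := hint.trans (integral_abs_eval_rpow_mono P hq.le ha (by linarith) hb')
  calc M ^ q = 4 * 2 ^ q * n ^ 2 * (h * (M / 2) ^ q) := by
        rw [Real.div_rpow (show 0 ≤ M from hM.le) zero_le_two]
        have : (2 : ℝ) ^ q ≠ 0 := by positivity
        calc M ^ q = 4 * (n ^ 2 * h) * M ^ q := by rw [hnh]; ring
          _ = _ := by field_simp
    _ ≤ _ := by gcongr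

/-- The elementary inequality which turns Nikolskii's inequality into the bound on short
intervals. -/
theorem min_one_le_div_rpow {q K c N d : ℝ} (hq : 0 < q) (hK : 0 < K) (hc : 0 < c) (hN : 1 ≤ N)
    (hd : d ≤ (c * N) ^ (-(max q 1))) :
    min 1 (d * (K * N)) ≤ ((K + K ^ (1 / q)) / c) ^ q := by
  have hN0 : 0 < N := by linarith
  have hKq : 0 < K ^ (1 / q) := by positivity
  rcases le_total 1 q with h | h
  · rw [max_eq_left h] at hd
    refine (min_le_right _ _).trans ?_
    calc d * (K * N) ≤ (c * N) ^ (-q) * (K * N) := by gcongr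
      _ = K / c ^ q * (N / N ^ q) := by
        rw [Real.rpow_neg (by positivity), Real.mul_rpow hc.le hN0.le]
        field_simp
      _ ≤ K / c ^ q * 1 := by
        gcongr
        rw [div_le_one (by positivity)]
        exact Real.self_le_rpow_of_one_le hN h
      _ = (K ^ (1 / q) / c) ^ q := by
        rw [Real.div_rpow hKq.le hc.le, ← Real.rpow_mul hK.le, one_div_mul_cancel hq.ne',
          Real.rpow_one, mul_one]
      _ ≤ _ := by gcongr; linarith
  · rw [max_eq_right h, Real.rpow_neg_one] at hd
    have hmono : (K / c) ^ q ≤ ((K + K ^ (1 / q)) / c) ^ q := by gcongr; linarith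
    refine le_trans ?_ hmono
    rcases le_total c K with hcK | hcK
    · exact (min_le_left _ _).trans
        (Real.one_le_rpow ((one_le_div hc).2 hcK) hq.le)
    · refine (min_le_right _ _).trans ?_
      calc d * (K * N) ≤ (c * N)⁻¹ * (K * N) := by gcongr
        _ = K / c := by field_simp
        _ ≤ (K / c) ^ q :=
          Real.self_le_rpow_of_le_one (by positivity) ((div_le_one hc).2 hcK) h

/-- A Remez-type lemma: the `L_q` norm of a polynomial of degree at most `n` over a
sufficiently short subinterval of `[-1,1]` is controlled by its `L_q` norm on `[-1,1]`. -/
theorem stmt8 (q : ℝ) (hq : 0 < q) :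
    ∃ C : ℝ, 0 < C ∧ ∀ c : ℝ, 0 < c → ∀ n : ℕ, 0 < n → ∀ a b : ℝ,
      -1 ≤ a → b ≤ 1 → 0 < b - a → b - a ≤ (c * (n : ℝ) ^ 2) ^ (-(max q 1)) →
      ∀ P : Polynomial ℝ, P.natDegree ≤ n →
        LqNorm (fun x => P.eval x) q a b ≤ (C / c) * LqNorm (fun x => P.eval x) q (-1) 1 := by
  set K : ℝ := 4 * 2 ^ q with hK
  have hKpos : 0 < K := by positivity
  refine ⟨K + K ^ (1 / q), by positivity, fun c hc n hn a b ha hb hab hlen P hP => ?_⟩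
  have hn1 : (1 : ℝ) ≤ (n : ℝ) ^ 2 := one_le_pow₀ (by exact_mod_cast hn)
  unfold LqNorm
  set I := ∫ x in (-1 : ℝ)..1, |P.eval x| ^ q with hI
  have hI0 : 0 ≤ I := intervalIntegral.integral_nonneg (by norm_num)
    fun x _ => Real.rpow_nonneg (abs_nonneg _) q
  have hA0 : 0 ≤ ∫ x in a..b, |P.eval x| ^ q := intervalIntegral.integral_nonneg (by linarith)
    fun x _ => Real.rpow_nonneg (abs_nonneg _) q
  have hmono : ∫ x in a..b, |P.eval x| ^ q ≤ 1 * I := by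
    rw [one_mul]
    exact integral_abs_eval_rpow_mono P hq.le ha (by linarith) hb
  have hshort : ∫ x in a..b, |P.eval x| ^ q ≤ (b - a) * (K * n ^ 2) * I := by
    have := intervalIntegral.integral_mono_on (by linarith : a ≤ b)
      (intervalIntegrable_abs_eval_rpow P hq.le a b)
      (intervalIntegrable_const (μ := volume) (c := K * n ^ 2 * I)) (fun x hx =>
        abs_eval_rpow_le_integral hq hn hP ⟨ha.trans hx.1, hx.2.trans hb⟩)
    rw [intervalIntegral.integral_const, smul_eq_mul] at this
    exact this.trans_eq (by ring)
  have hfinal : ∫ x in a..b, |P.eval x| ^ q ≤ ((K + K ^ (1 / q)) / c) ^ q * I := by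
    refine le_trans ?_ (mul_le_mul_of_nonneg_right
      (min_one_le_div_rpow hq hKpos hc hn1 hlen) hI0)
    rw [min_mul_of_nonneg _ _ hI0]
    exact le_min hmono hshort
  calc (∫ x in a..b, |P.eval x| ^ q) ^ (1 / q)
      ≤ (((K + K ^ (1 / q)) / c) ^ q * I) ^ (1 / q) :=
        Real.rpow_le_rpow hA0 hfinal (by positivity)
    _ = (K + K ^ (1 / q)) / c * I ^ (1 / q) := by
        rw [Real.mul_rpow (by positivity) hI0, ← Real.rpow_mul (by positivity),
          mul_one_div_cancel hq.ne', Real.rpow_one]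
end

section
/- For every real number 0 < q < 1 there exists a constant c₀ = c₀(q) ∈ (0, 1) such that for every positive integer n and every real polynomial P of degree at most n with P(−1) = 0, P(x) ≥ 0 and P'(x) ≥ 0 for all x ∈ [−1, 1], one has ∫_{−1}^{1} P'(x)^q dx ≤ (2/q) · ∫_{−1}^{1 − c₀/n²} P(x)^q (1 − x)^{−q} dx. -/
open Polynomial MeasureTheory

/-- A polynomial whose derivative is nonnegative on `[-1, 1]` is monotone there. -/
lemma monotoneOn_eval_of_derivative_nonneg {P : ℝ[X]}
    (hd : ∀ x ∈ Set.Icc (-1 : ℝ) 1, 0 ≤ P.derivative.eval x) :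
    MonotoneOn (fun x => P.eval x) (Set.Icc (-1 : ℝ) 1) := by
  refine monotoneOn_of_deriv_nonneg (convex_Icc _ _) P.continuous.continuousOn
    P.differentiable.differentiableOn fun x hx => ?_
  rw [P.deriv]
  exact hd x (interior_subset hx)

/-- A nonzero polynomial, nonnegative and monotone on `[-1, 1]`, is positive on `(-1, 1]`. -/
lemma eval_pos_of_monotoneOn {P : ℝ[X]} (hP : P ≠ 0)
    (h0 : ∀ x ∈ Set.Icc (-1 : ℝ) 1, 0 ≤ P.eval x)
    (hm : MonotoneOn (fun x => P.eval x) (Set.Icc (-1 : ℝ) 1)) {x : ℝ}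
    (hx : x ∈ Set.Ioc (-1 : ℝ) 1) : 0 < P.eval x := by
  have hx' : x ∈ Set.Icc (-1 : ℝ) 1 := ⟨hx.1.le, hx.2⟩
  refine (h0 x hx').lt_of_ne fun hzero => hP ?_
  refine Polynomial.eq_zero_of_infinite_isRoot P ((Set.Icc_infinite hx.1).mono fun y hy => ?_)
  have hy' : y ∈ Set.Icc (-1 : ℝ) 1 := ⟨hy.1, hy.2.trans hx.2⟩
  have hyx : P.eval y ≤ P.eval x := hm hy' hx' hy.2
  exact le_antisymm (hyx.trans_eq hzero.symm) (h0 y hy')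

/-- Markov's inequality at the right endpoint of `[-1, y]`. -/
lemma derivative_eval_mul_le_sq_mul {n : ℕ} {P : ℝ[X]} (hn : P.natDegree ≤ n) {M y : ℝ}
    (hM : 0 < M) (hy : y ∈ Set.Icc (-1 : ℝ) 1)
    (hb : ∀ x ∈ Set.Icc (-1 : ℝ) y, |P.eval x| ≤ M) :
    P.derivative.eval y * ((1 + y) / 2) ≤ (n : ℝ) ^ 2 * M := by
  set L : ℝ[X] := C ((1 + y) / 2) * X + C ((y - 1) / 2) with hL
  have hdeg : (C M⁻¹ * P.comp L).degree ≤ n := by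
    refine natDegree_le_iff_degree_le.mp ((natDegree_C_mul_le _ _).trans ?_)
    refine natDegree_comp_le.trans ?_
    exact (Nat.mul_le_mul hn natDegree_linear_le).trans_eq (mul_one n)
  have hbound : ∀ x ∈ Set.Icc (-1 : ℝ) 1, |(C M⁻¹ * P.comp L).eval x| ≤ 1 := by
    intro x hx
    have hmem : (1 + y) / 2 * x + (y - 1) / 2 ∈ Set.Icc (-1 : ℝ) y := by
      constructor <;> nlinarith [hx.1, hx.2, hy.1, hy.2]
    have := hb _ hmem
    simp only [hL, eval_mul, eval_C, eval_comp, eval_add, eval_X, abs_mul, abs_inv, abs_of_pos hM]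
    rw [inv_mul_le_iff₀ hM]
    simpa using this
  have key := Chebyshev.eval_iterate_derivative_le_of_forall_abs_le_one (k := 1) le_rfl hdeg hbound
  have hpt : (1 + y) / 2 + (y - 1) / 2 = y := by ring
  simp [hL, derivative_comp, Chebyshev.T_derivative_eq_U, hpt] at key
  rw [inv_mul_le_iff₀ hM] at key
  linarith

/-- A polynomial of degree at most `n` that is nonnegative and monotone on `[-1, 1]` keeps half of
its maximum at distance `1 / (4 n²)` from the right endpoint. -/
lemma half_eval_one_le_eval {n : ℕ} (hn0 : 0 < n) {P : ℝ[X]} (hn : P.natDegree ≤ n)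
    (h0 : ∀ x ∈ Set.Icc (-1 : ℝ) 1, 0 ≤ P.eval x)
    (hm : MonotoneOn (fun x => P.eval x) (Set.Icc (-1 : ℝ) 1)) (h1 : 0 < P.eval 1) {x : ℝ}
    (hx : x ∈ Set.Icc (1 - 1 / 4 / (n : ℝ) ^ 2) 1) : P.eval 1 / 2 ≤ P.eval x := by
  have hn1 : (1 : ℝ) ≤ (n : ℝ) ^ 2 := one_le_pow₀ (by exact_mod_cast hn0)
  have hn2 : (0 : ℝ) < (n : ℝ) ^ 2 := by linarith
  have hd4 : 1 / 4 / (n : ℝ) ^ 2 ≤ 1 / 4 := div_le_self (by norm_num) hn1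
  have hder : ∀ y ∈ Set.Ioo x 1, deriv (fun x => P.eval x) y ≤ 2 * (n : ℝ) ^ 2 * P.eval 1 := by
    intro y hy
    have hy0 : 0 ≤ y := by linarith [hy.1, hx.1]
    have hyI : y ∈ Set.Icc (-1 : ℝ) 1 := ⟨by linarith, hy.2.le⟩
    have h := derivative_eval_mul_le_sq_mul hn h1 hyI fun z hz => by
      have hz' : z ∈ Set.Icc (-1 : ℝ) 1 := ⟨hz.1, hz.2.trans hyI.2⟩
      rw [abs_of_nonneg (h0 z hz')]
      exact hm hz' (by simp) hz'.2
    rw [P.deriv]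
    rcases le_total 0 (P.derivative.eval y) with h' | h'
    · nlinarith
    · exact h'.trans (by positivity)
  have hmv := (convex_Icc x 1).image_sub_le_mul_sub_of_deriv_le P.continuous.continuousOn
    P.differentiable.differentiableOn (by rwa [interior_Icc]) x (by simp [hx.2]) 1 (by simp [hx.2])
    hx.2
  have hlen : (n : ℝ) ^ 2 * (1 - x) ≤ 1 / 4 := by
    have : 1 - x ≤ 1 / 4 / (n : ℝ) ^ 2 := by linarith [hx.1]
    rw [le_div_iff₀ hn2] at this
    linarith
  nlinarith

/-- Weighted arithmetic-geometric mean inequality with a free positive weight. -/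
lemma rpow_le_mul_rpow_sub_one_add {q a w : ℝ} (hq0 : 0 < q) (hq1 : q < 1) (ha : 0 ≤ a)
    (hw : 0 < w) : a ^ q ≤ q * (w ^ (q - 1) * a) + (1 - q) * w ^ q := by
  have h := Real.geom_mean_le_arith_mean2_weighted hq0.le (sub_nonneg.2 hq1.le)
    (mul_nonneg (Real.rpow_nonneg hw.le (q - 1)) ha) (Real.rpow_nonneg hw.le q) (by ring)
  rw [Real.mul_rpow (Real.rpow_nonneg hw.le _) ha, ← Real.rpow_mul hw.le, ← Real.rpow_mul hw.le,
    mul_right_comm, ← Real.rpow_add hw, show (q - 1) * q + q * (1 - q) = 0 by ring,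
    Real.rpow_zero, one_mul] at h
  exact h

lemma intervalIntegrable_one_sub_rpow_neg {q : ℝ} (hq1 : q < 1) (a b : ℝ) :
    IntervalIntegrable (fun x : ℝ => (1 - x) ^ (-q)) volume a b := by
  have := (intervalIntegral.intervalIntegrable_rpow' (a := 1 - a) (b := 1 - b)
    (show -1 < -q by linarith)).comp_sub_left 1
  simpa using this

lemma integral_one_sub_rpow_neg {q : ℝ} (hq1 : q < 1) (a b : ℝ) :
    ∫ x in (1 - b)..(1 - a), (1 - x) ^ (-q) = (b ^ (1 - q) - a ^ (1 - q)) / (1 - q) := by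
  rw [intervalIntegral.integral_comp_sub_left (fun x : ℝ => x ^ (-q)),
    integral_rpow (Or.inl (by linarith))]
  simp [add_comm, sub_eq_add_neg]

lemma intervalIntegrable_eval_rpow_mul {q : ℝ} (hq0 : 0 < q) (hq1 : q < 1) (P : ℝ[X]) (a b : ℝ) :
    IntervalIntegrable (fun x => P.eval x ^ q * (1 - x) ^ (-q)) volume a b :=
  (intervalIntegrable_one_sub_rpow_neg hq1 a b).continuousOn_mul
    (P.continuous.rpow_const fun _ => Or.inr hq0.le).continuousOn

/-- Hardy-type inequality on the whole interval. -/
lemma integral_derivative_rpow_le {q : ℝ} (hq0 : 0 < q) (hq1 : q < 1) {P : ℝ[X]}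
    (hroot : P.eval (-1) = 0) (hpos : ∀ x ∈ Set.Ioc (-1 : ℝ) 1, 0 < P.eval x)
    (hd : ∀ x ∈ Set.Icc (-1 : ℝ) 1, 0 ≤ P.derivative.eval x) :
    ∫ x in (-1 : ℝ)..1, P.derivative.eval x ^ q ≤
      2 * (1 - q) * ∫ x in (-1 : ℝ)..1, P.eval x ^ q * (1 - x) ^ (-q) := by
  have hG := intervalIntegrable_eval_rpow_mul hq0 hq1 P (-1) 1
  have hD : IntervalIntegrable (fun x => P.derivative.eval x ^ q) volume (-1) 1 :=
    (P.derivative.continuous.rpow_const fun _ => Or.inr hq0.le).intervalIntegrable _ _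
  have hφ := hD.sub (hG.const_mul (2 * (1 - q)))
  have key := intervalIntegral.integral_le_sub_of_hasDeriv_right_of_le
    (g := fun x => P.eval x ^ q * (1 - x) ^ (1 - q))
    (g' := fun x => P.derivative.eval x * q * P.eval x ^ (q - 1) * (1 - x) ^ (1 - q) +
      P.eval x ^ q * (-1 * (1 - q) * (1 - x) ^ (1 - q - 1)))
    (φ := fun x => P.derivative.eval x ^ q - 2 * (1 - q) * (P.eval x ^ q * (1 - x) ^ (-q)))
    (show (-1 : ℝ) ≤ 1 by norm_num) ?_ ?_ ?_ ?_
  · rw [intervalIntegral.integral_sub hD (hG.const_mul _), intervalIntegral.integral_const_mul,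
      hroot, sub_self, Real.zero_rpow hq0.ne', Real.zero_rpow (by linarith)] at key
    linarith
  · refine ((P.continuous.rpow_const fun _ => Or.inr hq0.le).mul
      ((continuous_const.sub continuous_id).rpow_const fun _ => Or.inr ?_)).continuousOn
    linarith
  · intro x hx
    have hx1 : 0 < 1 - x := by linarith [hx.2]
    have hPx := hpos x ⟨hx.1, hx.2.le⟩
    exact (((P.hasDerivAt x).rpow_const (Or.inl hPx.ne')).mul
      (((hasDerivAt_id x).const_sub 1).rpow_const (Or.inl hx1.ne'))).hasDerivWithinAt
  · exact (intervalIntegrable_iff_integrableOn_Icc_of_le (by norm_num)).1 hφ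
  · intro x hx
    have hx1 : 0 < 1 - x := by linarith [hx.2]
    have hPx := hpos x ⟨hx.1, hx.2.le⟩
    have h := rpow_le_mul_rpow_sub_one_add hq0 hq1 (hd x ⟨hx.1.le, hx.2.le⟩) (div_pos hPx hx1)
    rw [Real.div_rpow hPx.le hx1.le, Real.div_rpow hPx.le hx1.le, div_eq_mul_inv, div_eq_mul_inv,
      ← Real.rpow_neg hx1.le, ← Real.rpow_neg hx1.le, neg_sub] at h
    rw [show 1 - q - 1 = -q by ring]
    linarith

/-- The part of the integral within `c / n²` of the right endpoint is dominated by the rest. -/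
lemma integral_tail_le {q c : ℝ} (hq0 : 0 < q) (hq1 : q < 1) (hc0 : 0 < c) (hc4 : c ≤ 1 / 4)
    (hc : c ^ (1 - q) ≤ 1 / 8) {n : ℕ} (hn0 : 0 < n) {P : ℝ[X]} (hn : P.natDegree ≤ n)
    (h0 : ∀ x ∈ Set.Icc (-1 : ℝ) 1, 0 ≤ P.eval x)
    (hm : MonotoneOn (fun x => P.eval x) (Set.Icc (-1 : ℝ) 1)) (h1 : 0 < P.eval 1) :
    ∫ x in (1 - c / (n : ℝ) ^ 2)..1, P.eval x ^ q * (1 - x) ^ (-q) ≤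
      ∫ x in (-1 : ℝ)..(1 - c / (n : ℝ) ^ 2), P.eval x ^ q * (1 - x) ^ (-q) := by
  have hn1 : (1 : ℝ) ≤ (n : ℝ) ^ 2 := one_le_pow₀ (by exact_mod_cast hn0)
  have hn2 : (0 : ℝ) < (n : ℝ) ^ 2 := by linarith
  have hG := intervalIntegrable_eval_rpow_mul hq0 hq1 P
  have hI := intervalIntegrable_one_sub_rpow_neg hq1
  have hq : 0 < 1 - q := by linarith
  set A := c / (n : ℝ) ^ 2 with hA
  set B := 1 / 4 / (n : ℝ) ^ 2 with hB
  have hA0 : 0 < A := by positivity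
  have hAB : A ≤ B := by rw [hA, hB]; gcongr
  have hB4 : B ≤ 1 / 4 := div_le_self (by norm_num) hn1
  have hupper : ∫ x in (1 - A)..1, P.eval x ^ q * (1 - x) ^ (-q) ≤
      P.eval 1 ^ q * (A ^ (1 - q) / (1 - q)) := by
    have hint := integral_one_sub_rpow_neg hq1 0 A
    rw [sub_zero, Real.zero_rpow hq.ne', sub_zero] at hint
    rw [← hint, ← intervalIntegral.integral_const_mul]
    refine intervalIntegral.integral_mono_on (by linarith) (hG _ _) ((hI _ _).const_mul _)
      fun x hx => ?_
    have hx' : x ∈ Set.Icc (-1 : ℝ) 1 := ⟨by linarith [hx.1], hx.2⟩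
    exact mul_le_mul_of_nonneg_right
      (Real.rpow_le_rpow (h0 x hx') (hm hx' (by simp) hx.2) hq0.le)
      (Real.rpow_nonneg (by linarith [hx.2]) _)
  have hlower : (P.eval 1 / 2) ^ q * ((B ^ (1 - q) - A ^ (1 - q)) / (1 - q)) ≤
      ∫ x in (1 - B)..(1 - A), P.eval x ^ q * (1 - x) ^ (-q) := by
    rw [← integral_one_sub_rpow_neg hq1 A B, ← intervalIntegral.integral_const_mul]
    refine intervalIntegral.integral_mono_on (by linarith) ((hI _ _).const_mul _) (hG _ _)
      fun x hx => ?_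
    have hx1 : x ≤ 1 := by linarith [hx.2]
    exact mul_le_mul_of_nonneg_right
      (Real.rpow_le_rpow (by linarith) (half_eval_one_le_eval hn0 hn h0 hm h1 ⟨hx.1, hx1⟩) hq0.le)
      (Real.rpow_nonneg (by linarith) _)
  have hrest : 0 ≤ ∫ x in (-1 : ℝ)..(1 - B), P.eval x ^ q * (1 - x) ^ (-q) := by
    refine intervalIntegral.integral_nonneg (by linarith) fun x hx => ?_
    have hx1 : x ≤ 1 := by linarith [hx.2]
    exact mul_nonneg (Real.rpow_nonneg (h0 x ⟨hx.1, hx1⟩) _)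
      (Real.rpow_nonneg (by linarith) _)
  have hsplit := intervalIntegral.integral_add_adjacent_intervals (hG (-1) (1 - B))
    (hG (1 - B) (1 - A))
  have hcompare : P.eval 1 ^ q * (A ^ (1 - q) / (1 - q)) ≤
      (P.eval 1 / 2) ^ q * ((B ^ (1 - q) - A ^ (1 - q)) / (1 - q)) := by
    have hP : 0 < P.eval 1 ^ q := Real.rpow_pos_of_pos h1 q
    have hN : 0 < ((n : ℝ) ^ 2) ^ (1 - q) := Real.rpow_pos_of_pos hn2 _
    have hquarter : (1 / 4 : ℝ) ≤ (1 / 2) ^ q * (1 / 4) ^ (1 - q) := by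
      calc (1 / 4 : ℝ) = (1 / 4) ^ q * (1 / 4) ^ (1 - q) := by
            rw [← Real.rpow_add (by norm_num)]; simp
        _ ≤ _ := by gcongr; norm_num
    have hhalf : (1 / 2 : ℝ) ^ q ≤ 1 := Real.rpow_le_one (by norm_num) (by norm_num) hq0.le
    have hcnn : 0 ≤ c ^ (1 - q) := Real.rpow_nonneg hc0.le _
    have hconst : c ^ (1 - q) ≤ (1 / 2) ^ q * ((1 / 4) ^ (1 - q) - c ^ (1 - q)) := by nlinarith
    rw [div_eq_mul_one_div (P.eval 1), Real.mul_rpow h1.le (by norm_num), hA, hB,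
      Real.div_rpow hc0.le hn2.le, Real.div_rpow (by norm_num) hn2.le, ← sub_div, mul_assoc]
    refine mul_le_mul_of_nonneg_left ?_ hP.le
    rw [← mul_div_assoc, ← mul_div_assoc]
    gcongr
  linarith

/-- For `0 < q < 1` there is `c₀ ∈ (0,1)` such that `∫_{-1}^1 P'^q` is bounded by
`(2/q)` times the integral of `P^q (1-x)^(-q)` away from the right endpoint. -/
theorem stmt12 (q : ℝ) (hq0 : 0 < q) (hq1 : q < 1) :
    ∃ c₀ : ℝ, 0 < c₀ ∧ c₀ < 1 ∧ ∀ n : ℕ, 0 < n →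
      ∀ P : Polynomial ℝ, P.natDegree ≤ n → P.eval (-1) = 0 →
        (∀ x ∈ Set.Icc (-1 : ℝ) 1, 0 ≤ P.eval x) →
        (∀ x ∈ Set.Icc (-1 : ℝ) 1, 0 ≤ P.derivative.eval x) →
        (∫ x in (-1 : ℝ)..1, (P.derivative.eval x) ^ q) ≤
          (2 / q) * ∫ x in (-1 : ℝ)..(1 - c₀ / (n : ℝ) ^ 2),
            (P.eval x) ^ q * (1 - x) ^ (-q) := by
  have hq : 0 < 1 - q := by linarith
  set c : ℝ := (1 / 8) ^ (1 / (1 - q)) with hc_def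
  have hc0 : 0 < c := Real.rpow_pos_of_pos (by norm_num) _
  have hc8 : c ≤ 1 / 8 := by
    simpa [hc_def] using Real.rpow_le_rpow_of_exponent_ge (show (0 : ℝ) < 1 / 8 by norm_num)
      (by norm_num) (show 1 ≤ 1 / (1 - q) by rw [le_div_iff₀ hq]; linarith)
  have hc : c ^ (1 - q) = 1 / 8 := by
    rw [hc_def, ← Real.rpow_mul (by norm_num), one_div_mul_cancel hq.ne', Real.rpow_one]
  refine ⟨c, hc0, by linarith, fun n hn0 P hn hroot h0 hd => ?_⟩
  rcases eq_or_ne P 0 with rfl | hP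
  · simp [Real.zero_rpow hq0.ne']
  have hm := monotoneOn_eval_of_derivative_nonneg hd
  have hpos := fun x => eval_pos_of_monotoneOn hP h0 hm (x := x)
  have hhardy := integral_derivative_rpow_le hq0 hq1 hroot hpos hd
  have htail := integral_tail_le hq0 hq1 hc0 (by linarith) hc.le hn0 hn h0 hm (hpos 1 (by simp))
  have hG := intervalIntegrable_eval_rpow_mul hq0 hq1 P
  rw [← intervalIntegral.integral_add_adjacent_intervals (hG (-1) (1 - c / (n : ℝ) ^ 2))
    (hG (1 - c / (n : ℝ) ^ 2) 1)] at hhardy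
  have hcn : c / (n : ℝ) ^ 2 ≤ c :=
    div_le_self hc0.le (one_le_pow₀ (by exact_mod_cast hn0))
  have hmain : 0 ≤ ∫ x in (-1 : ℝ)..(1 - c / (n : ℝ) ^ 2), P.eval x ^ q * (1 - x) ^ (-q) := by
    refine intervalIntegral.integral_nonneg (by linarith) fun x hx => ?_
    have hx1 : x ≤ 1 := hx.2.trans (by linarith [show 0 ≤ c / (n : ℝ) ^ 2 by positivity])
    exact mul_nonneg (Real.rpow_nonneg (h0 x ⟨hx.1, hx1⟩) _)
      (Real.rpow_nonneg (by linarith) _)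
  have hconst : 4 * (1 - q) ≤ 2 / q := by
    rw [le_div_iff₀ hq0]
    nlinarith [sq_nonneg (2 * q - 1)]
  calc _ ≤ _ := hhardy
    _ ≤ 4 * (1 - q) * ∫ x in (-1 : ℝ)..(1 - c / (n : ℝ) ^ 2), P.eval x ^ q * (1 - x) ^ (-q) := by
      nlinarith
    _ ≤ _ := mul_le_mul_of_nonneg_right hconst hmain
end
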